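/- arXiv:2202.08941 — 2 statements merged into one kernel-verified Lean document; each statement's English description precedes it below -/
import Mathlib

section
/- Let G₁ and G₂ be negative definite symmetric integer matrices on disjoint finite sets V₁ and V₂, with an unweighted vertex v₀ attached to both via ε₁ : V₁ → {0,1} and ε₂ : V₂ → {0,1} (the graphs merged at v₀), and let G = G₁ ⊕ G₂ on V₁ ⊔ V₂ with attaching data ε = (ε₁,ε₂). Writing h_{V,1}, h_{V,2}, h_V for the corresponding second height functions, for all characteristic vectors K₁, K₂ and all E₁ ⊆ V₁, E₂ ⊆ V₂ one has h_V([(K₁,K₂), E₁ ⊔ E₂]) = h_{V,1}([K₁,E₁]) + h_{V,2}([K₂,E₂]). -/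
/-!
A block-diagonal matrix has block-diagonal inverse, so `h_U` of `G₁ ⊕ G₂` at `(K₁, K₂)` is the sum
of the two heights (`hU_fromBlocks`); negative definiteness enters only to make the blocks
invertible. Translating by `v₀` and by vertices of the cube also acts blockwise, and the subsets of
`E₁ ⊔ E₂` are exactly the `I₁ ⊔ I₂` with `Iⱼ ⊆ Eⱼ`. The height of the cube is therefore the minimum
of `f(I₁) + g(I₂)` over independent choices of `I₁` and `I₂`, which is the sum of the two minima.
-/

open Matrix Finset

variable {V : Type*}

/-- Negative definiteness of a symmetric integer matrix, as a quadratic form over `ℚ`. -/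
def MatNegDef [Fintype V] (G : Matrix V V ℤ) : Prop :=
  ∀ x : V → ℚ, x ≠ 0 → x ⬝ᵥ (G.map (Int.cast : ℤ → ℚ)).mulVec x < 0

/-- `K` is a characteristic vector for `G`: `K v ≡ G v v (mod 2)` for all `v`. -/
def IsCharacteristic [Fintype V] (G : Matrix V V ℤ) (K : V → ℤ) : Prop :=
  ∀ v : V, (2 : ℤ) ∣ (K v - G v v)

/-- The translate `K + x` of a characteristic vector by `x : V → ℤ`. -/
def chTrans [Fintype V] (G : Matrix V V ℤ) (K : V → ℤ) (x : V → ℤ) : V → ℤ :=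
  fun u => K u + 2 * G.mulVec x u

/-- `i` times the standard basis vector at `v`. -/
def dirVec [DecidableEq V] (v : V) (i : ℤ) : V → ℤ := fun u => if u = v then i else 0

/-- The height function `h_U(K) = (Kᵀ G⁻¹ K + s)/4`. -/
noncomputable def hU [Fintype V] [DecidableEq V] (G : Matrix V V ℤ) (K : V → ℤ) : ℚ :=
  ((fun u => (K u : ℚ)) ⬝ᵥ ((G.map (Int.cast : ℤ → ℚ))⁻¹).mulVec (fun u => (K u : ℚ))
      + (Fintype.card V : ℚ)) / 4

/-- The height of a cube: `h_U([K,E]) = min_{I ⊆ E} h_U(K + Σ_{v ∈ I} e_v)`. -/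
noncomputable def hUcube [Fintype V] [DecidableEq V] (G : Matrix V V ℤ) (K : V → ℤ)
    (E : Finset V) : ℚ :=
  E.powerset.inf' (Finset.powerset_nonempty _)
    (fun I => hU G (chTrans G K (fun u => if u ∈ I then (1 : ℤ) else 0)))

/-- The translate `K + v₀` by the unweighted vertex, attached via `ε`. -/
def knotTrans (K ε : V → ℤ) : V → ℤ := fun u => K u + 2 * ε u

/-- The second height function `h_V([K,E]) = h_U([K + v₀, E])`. -/
noncomputable def hVcube [Fintype V] [DecidableEq V] (G : Matrix V V ℤ) (ε : V → ℤ)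
    (K : V → ℤ) (E : Finset V) : ℚ :=
  hUcube G (knotTrans K ε) E

theorem MatNegDef.isUnit_det [Fintype V] [DecidableEq V] {G : Matrix V V ℤ} (h : MatNegDef G) :
    IsUnit (G.map (Int.cast : ℤ → ℚ)).det := by
  rw [isUnit_iff_ne_zero]
  intro h0
  obtain ⟨x, hx, hGx⟩ := Matrix.exists_mulVec_eq_zero_iff.mpr h0
  have := h x hx
  simp [hGx] at this

theorem hU_fromBlocks {V₁ V₂ : Type*}
    [Fintype V₁] [DecidableEq V₁] [Fintype V₂] [DecidableEq V₂]
    {G₁ : Matrix V₁ V₁ ℤ} {G₂ : Matrix V₂ V₂ ℤ} (hneg₁ : MatNegDef G₁) (hneg₂ : MatNegDef G₂)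
    (K₁ : V₁ → ℤ) (K₂ : V₂ → ℤ) :
    hU (Matrix.fromBlocks G₁ 0 0 G₂) (Sum.elim K₁ K₂) = hU G₁ K₁ + hU G₂ K₂ := by
  have hinv : ((Matrix.fromBlocks G₁ 0 0 G₂).map (Int.cast : ℤ → ℚ))⁻¹ =
      Matrix.fromBlocks (G₁.map (Int.cast : ℤ → ℚ))⁻¹ 0 0 (G₂.map (Int.cast : ℤ → ℚ))⁻¹ := by
    apply Matrix.inv_eq_right_inv
    rw [Matrix.fromBlocks_map, Matrix.map_zero _ Int.cast_zero, Matrix.map_zero _ Int.cast_zero,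
      Matrix.fromBlocks_multiply]
    simp [Matrix.mul_nonsing_inv _ hneg₁.isUnit_det, Matrix.mul_nonsing_inv _ hneg₂.isUnit_det]
  have hcast : (fun u => ((Sum.elim K₁ K₂ u : ℤ) : ℚ)) =
      Sum.elim (fun u => (K₁ u : ℚ)) (fun u => (K₂ u : ℚ)) := by
    ext (u | u) <;> rfl
  unfold hU
  rw [hinv, hcast, Matrix.fromBlocks_mulVec, Fintype.card_sum]
  simp only [Sum.elim_comp_inl, Sum.elim_comp_inr, Matrix.zero_mulVec, add_zero, zero_add,
    sumElim_dotProduct_sumElim]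
  push_cast
  ring

theorem knotTrans_sumElim {V₁ V₂ : Type*} (K₁ ε₁ : V₁ → ℤ) (K₂ ε₂ : V₂ → ℤ) :
    knotTrans (Sum.elim K₁ K₂) (Sum.elim ε₁ ε₂) =
      Sum.elim (knotTrans K₁ ε₁) (knotTrans K₂ ε₂) := by
  ext (u | u) <;> rfl

theorem chTrans_fromBlocks {V₁ V₂ : Type*} [Fintype V₁] [Fintype V₂]
    (G₁ : Matrix V₁ V₁ ℤ) (G₂ : Matrix V₂ V₂ ℤ) (K₁ : V₁ → ℤ) (K₂ : V₂ → ℤ)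
    (x : V₁ ⊕ V₂ → ℤ) :
    chTrans (Matrix.fromBlocks G₁ 0 0 G₂) (Sum.elim K₁ K₂) x =
      Sum.elim (chTrans G₁ K₁ (x ∘ Sum.inl)) (chTrans G₂ K₂ (x ∘ Sum.inr)) := by
  ext (u | u) <;> simp [chTrans, Matrix.fromBlocks_mulVec]

theorem hUcube_fromBlocks {V₁ V₂ : Type*}
    [Fintype V₁] [DecidableEq V₁] [Fintype V₂] [DecidableEq V₂]
    {G₁ : Matrix V₁ V₁ ℤ} {G₂ : Matrix V₂ V₂ ℤ} (hneg₁ : MatNegDef G₁) (hneg₂ : MatNegDef G₂)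
    (K₁ : V₁ → ℤ) (K₂ : V₂ → ℤ) (E₁ : Finset V₁) (E₂ : Finset V₂) :
    hUcube (Matrix.fromBlocks G₁ 0 0 G₂) (Sum.elim K₁ K₂) (E₁.disjSum E₂) =
      hUcube G₁ K₁ E₁ + hUcube G₂ K₂ E₂ := by
  have key : ∀ I : Finset (V₁ ⊕ V₂),
      hU (Matrix.fromBlocks G₁ 0 0 G₂) (chTrans (Matrix.fromBlocks G₁ 0 0 G₂) (Sum.elim K₁ K₂)
        (fun u => if u ∈ I then (1 : ℤ) else 0)) =
      hU G₁ (chTrans G₁ K₁ (fun u => if u ∈ I.toLeft then (1 : ℤ) else 0)) +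
      hU G₂ (chTrans G₂ K₂ (fun u => if u ∈ I.toRight then (1 : ℤ) else 0)) := by
    intro I
    rw [chTrans_fromBlocks, hU_fromBlocks hneg₁ hneg₂]
    simp only [Function.comp_def, Finset.mem_toLeft, Finset.mem_toRight]
  unfold hUcube
  apply le_antisymm
  · obtain ⟨I₁, hI₁, h₁⟩ := Finset.exists_mem_eq_inf' (Finset.powerset_nonempty E₁)
      (fun I => hU G₁ (chTrans G₁ K₁ (fun u => if u ∈ I then (1 : ℤ) else 0)))
    obtain ⟨I₂, hI₂, h₂⟩ := Finset.exists_mem_eq_inf' (Finset.powerset_nonempty E₂)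
      (fun I => hU G₂ (chTrans G₂ K₂ (fun u => if u ∈ I then (1 : ℤ) else 0)))
    rw [h₁, h₂]
    have hI : I₁.disjSum I₂ ∈ (E₁.disjSum E₂).powerset :=
      Finset.mem_powerset.mpr
        (Finset.disjSum_mono (Finset.mem_powerset.mp hI₁) (Finset.mem_powerset.mp hI₂))
    refine (Finset.inf'_le _ hI).trans_eq ?_
    rw [key, Finset.toLeft_disjSum, Finset.toRight_disjSum]
  · refine Finset.le_inf' _ _ fun I hI => ?_
    rw [Finset.mem_powerset] at hI
    rw [key]
    refine add_le_add (Finset.inf'_le _ (Finset.mem_powerset.mpr fun u hu => ?_))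
      (Finset.inf'_le _ (Finset.mem_powerset.mpr fun u hu => ?_))
    · exact Finset.inl_mem_disjSum.mp (hI (Finset.mem_toLeft.mp hu))
    · exact Finset.inr_mem_disjSum.mp (hI (Finset.mem_toRight.mp hu))

/-- Proposition `ConnectSumsKnot`: for graphs with an unweighted vertex
merged at `v₀`, the second height function of the disjoint union is the sum:
`h_V([(K₁,K₂), E₁ ⊔ E₂]) = h_{V,1}([K₁,E₁]) + h_{V,2}([K₂,E₂])`. -/
theorem hVcube_disjoint_sum {V₁ V₂ : Type*}
    [Fintype V₁] [DecidableEq V₁] [Fintype V₂] [DecidableEq V₂]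
    (G₁ : Matrix V₁ V₁ ℤ) (G₂ : Matrix V₂ V₂ ℤ)
    (hsym₁ : G₁.IsSymm) (hneg₁ : MatNegDef G₁)
    (hsym₂ : G₂.IsSymm) (hneg₂ : MatNegDef G₂)
    (ε₁ : V₁ → ℤ) (hε₁ : ∀ u, ε₁ u = 0 ∨ ε₁ u = 1)
    (ε₂ : V₂ → ℤ) (hε₂ : ∀ u, ε₂ u = 0 ∨ ε₂ u = 1)
    (K₁ : V₁ → ℤ) (hK₁ : IsCharacteristic G₁ K₁)
    (K₂ : V₂ → ℤ) (hK₂ : IsCharacteristic G₂ K₂)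
    (E₁ : Finset V₁) (E₂ : Finset V₂) :
    hVcube (Matrix.fromBlocks G₁ 0 0 G₂) (Sum.elim ε₁ ε₂) (Sum.elim K₁ K₂) (E₁.disjSum E₂) =
      hVcube G₁ ε₁ K₁ E₁ + hVcube G₂ ε₂ K₂ E₂ := by
  unfold hVcube
  rw [knotTrans_sumElim]
  exact hUcube_fromBlocks hneg₁ hneg₂ _ _ E₁ E₂
end

section
/- Let G be a negative definite symmetric integer matrix on a finite set V, let v ∈ V be a weighted vertex, and let an unweighted vertex v₀ be attached via any ε : V → {0,1}. Then there exists a choice of maxima in the direction v tuned to v₀: that is, an assignment to each cube [K,E] with v ∉ E of an integer m̃([K,E]), depending only on the orbit {[K+iv,E] : i ∈ ℤ}, such that [K + m̃([K,E])·v, E] maximizes h_U over the orbit and, among the h_U-maximizers in the orbit, maximizes h_V. -/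
/-!
Moving along the direction `v` changes `h_U` by the quadratic polynomial
`i ↦ i * K v + i ^ 2 * G v v` (`hU_chTrans_dirVec`), whose leading coefficient `G v v` is negative.
Since the height of a cube is at most the height of its base vertex, only finitely many
members of an orbit are at least as high as a given one, so the pair `(h_U, h_V)` has a
lexicographic maximum on each orbit (`exists_lex_max_of_le_quadratic`).

To make the choice depend only on the orbit, each orbit gets a canonical base point: translation by
`i` along `v` adds `2 * G v v * i` to `K v`, so the integer quotient `K v / (2 * G v v)`
is a coordinate on the orbit, and its zero is the base point. The maximum is chosen relative to
the base point and transported to every other member of the orbit.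
-/

open Matrix Finset

variable {V : Type*}

lemma MatNegDef.isUnit [Fintype V] [DecidableEq V] {G : Matrix V V ℤ} (hneg : MatNegDef G) :
    IsUnit (G.map (Int.cast : ℤ → ℚ)) := by
  rw [← Matrix.mulVec_injective_iff_isUnit]
  intro x y hxy
  by_contra hne
  have h := hneg (x - y) (sub_ne_zero.mpr hne)
  have h0 : (G.map (Int.cast : ℤ → ℚ)).mulVec (x - y) = 0 := by
    rw [Matrix.mulVec_sub]
    exact sub_eq_zero.mpr hxy
  rw [h0, dotProduct_zero] at h
  exact lt_irrefl _ h

lemma MatNegDef.diag_neg [Fintype V] [DecidableEq V] {G : Matrix V V ℤ} (hneg : MatNegDef G)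
    (v : V) : G v v < 0 := by
  have h := hneg (Pi.single v 1) (by simp)
  simp only [Matrix.mulVec_single_one, single_one_dotProduct, Matrix.col_apply,
    Matrix.map_apply] at h
  exact_mod_cast h

lemma dirVec_eq [DecidableEq V] (v : V) (i : ℤ) : dirVec v i = Pi.single v i := by
  ext u
  simp [dirVec, Pi.single_apply]

lemma chTrans_dirVec_apply [Fintype V] [DecidableEq V] (G : Matrix V V ℤ) (K : V → ℤ)
    (v u : V) (i : ℤ) : chTrans G K (dirVec v i) u = K u + 2 * (G u v * i) := by
  simp [chTrans, dirVec_eq, Matrix.mulVec_single]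

lemma chTrans_dirVec_add [Fintype V] [DecidableEq V] (G : Matrix V V ℤ) (K : V → ℤ)
    (v : V) (i j : ℤ) :
    chTrans G (chTrans G K (dirVec v i)) (dirVec v j) = chTrans G K (dirVec v (i + j)) := by
  ext u
  simp only [chTrans_dirVec_apply]
  ring

lemma hU_chTrans_dirVec [Fintype V] [DecidableEq V] {G : Matrix V V ℤ} (hsym : G.IsSymm)
    (hneg : MatNegDef G) (K : V → ℤ) (v : V) (i : ℤ) :
    hU G (chTrans G K (dirVec v i)) = hU G K + i * K v + i ^ 2 * G v v := by
  set A : Matrix V V ℚ := G.map (Int.cast : ℤ → ℚ) with hA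
  have hAdet : IsUnit A.det := (Matrix.isUnit_iff_isUnit_det A).mp hneg.isUnit
  have hAs : A.IsSymm := hsym.map _
  set k : V → ℚ := fun u => (K u : ℚ) with hk
  set e : V → ℚ := Pi.single v 1 with he
  have hx : (fun u => ((chTrans G K (dirVec v i) u : ℤ) : ℚ)) = k + (2 * i : ℚ) • A *ᵥ e := by
    ext u
    simp [chTrans_dirVec_apply, hk, he, hA]
    ring
  have h1 : A⁻¹ *ᵥ (A *ᵥ e) = e := by
    rw [Matrix.mulVec_mulVec, Matrix.nonsing_inv_mul _ hAdet, Matrix.one_mulVec]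
  have h2 : (A *ᵥ e) ⬝ᵥ (A⁻¹ *ᵥ k) = k ⬝ᵥ e := by
    rw [← Matrix.vecMul_transpose, hAs.eq, ← Matrix.dotProduct_mulVec, Matrix.mulVec_mulVec,
      Matrix.mul_nonsing_inv _ hAdet, Matrix.one_mulVec, dotProduct_comm]
  have h3 : k ⬝ᵥ e = K v := by simp [he, hk]
  have h4 : (A *ᵥ e) ⬝ᵥ e = G v v := by simp [he, hA]
  unfold hU
  rw [hx, ← hA, ← hk, Matrix.mulVec_add, Matrix.mulVec_smul, h1]
  simp only [dotProduct_add, add_dotProduct, smul_dotProduct, dotProduct_smul, h2, h3, h4,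
    smul_eq_mul]
  ring

/-- The subset `I = ∅` contributes the base vertex to the minimum. -/
lemma hUcube_le_hU [Fintype V] [DecidableEq V] (G : Matrix V V ℤ) (K : V → ℤ) (E : Finset V) :
    hUcube G K E ≤ hU G K := by
  refine (Finset.inf'_le _ (Finset.empty_mem_powerset E)).trans_eq ?_
  congr 1
  ext u
  simp [chTrans, Matrix.mulVec, dotProduct]

/-- A function on `ℤ` lying below a downward parabola attains its maximum, with ties
among the maximizers broken by a second function. -/
lemma exists_lex_max_of_le_quadratic (f g : ℤ → ℚ) (a b c : ℚ) (ha : a ≤ -1)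
    (hf : ∀ i : ℤ, f i ≤ c + i * b + i ^ 2 * a) :
    ∃ m : ℤ, (∀ i, f i ≤ f m) ∧ ∀ i, f i = f m → g i ≤ g m := by
  have hfin : {i : ℤ | f 0 ≤ f i}.Finite := by
    obtain ⟨N, hN⟩ := exists_nat_ge (|b| + |c - f 0| + 1)
    refine (Set.finite_Icc (-(N : ℤ)) N).subset fun i hi => ?_
    have hi' : f 0 ≤ c + i * b + i ^ 2 * a := le_trans hi (hf i)
    have habs : |(i : ℚ)| ≤ N := by
      by_contra! hlt
      have h1 : (i : ℚ) * b ≤ |(i : ℚ)| * |b| := (le_abs_self _).trans_eq (abs_mul _ _)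
      have h2 := le_abs_self (c - f 0)
      have h3 : (i : ℚ) ^ 2 = |(i : ℚ)| ^ 2 := (sq_abs _).symm
      nlinarith [abs_nonneg b, abs_nonneg (c - f 0), abs_nonneg (i : ℚ), sq_nonneg (i : ℚ)]
    rw [Set.mem_Icc, ← abs_le]
    exact_mod_cast habs
  obtain ⟨m, hm, hmax⟩ := hfin.toFinset.exists_max_image (fun i => toLex (f i, g i))
    ⟨0, by simp⟩
  have h0 : f 0 ≤ f m := by simpa using hm
  have key : ∀ i, f 0 ≤ f i → f i < f m ∨ f i = f m ∧ g i ≤ g m := fun i hi => by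
    simpa [Prod.Lex.toLex_le_toLex] using hmax i (by simpa using hi)
  have hle : ∀ i, f i ≤ f m := fun i => by
    rcases le_total (f 0) (f i) with h | h
    · rcases key i h with h' | h'
      exacts [h'.le, h'.1.le]
    · exact h.trans h0
  refine ⟨m, hle, fun i hi => ?_⟩
  rcases key i (hi ▸ h0) with h' | h'
  exacts [absurd hi h'.ne, h'.2]

/-- Corollary `existsTunedContractions`: for every weighted vertex `v` and
unweighted vertex `v₀` there exists a choice of maxima in the direction `v` tuned to `v₀`:
an assignment `m̃` depending only on the `v`-orbit such that `[K + m̃([K,E])·v, E]` maximizes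
`h_U` over the orbit, and among the `h_U`-maximizers maximizes `h_V`. -/
theorem exists_tuned_choice_of_maxima [Fintype V] [DecidableEq V]
    (G : Matrix V V ℤ) (hsym : G.IsSymm) (hneg : MatNegDef G)
    (ε : V → ℤ) (hε : ∀ u, ε u = 0 ∨ ε u = 1) (v : V) :
    ∃ mt : (V → ℤ) → Finset V → ℤ,
      (∀ K, IsCharacteristic G K → ∀ E : Finset V, v ∉ E → ∀ i : ℤ,
        mt (chTrans G K (dirVec v i)) E = mt K E - i) ∧
      (∀ K, IsCharacteristic G K → ∀ E : Finset V, v ∉ E → ∀ i : ℤ,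
        hUcube G (chTrans G K (dirVec v i)) E ≤
          hUcube G (chTrans G K (dirVec v (mt K E))) E) ∧
      (∀ K, IsCharacteristic G K → ∀ E : Finset V, v ∉ E → ∀ i : ℤ,
        hUcube G (chTrans G K (dirVec v i)) E = hUcube G (chTrans G K (dirVec v (mt K E))) E →
        hVcube G ε (chTrans G K (dirVec v i)) E ≤
          hVcube G ε (chTrans G K (dirVec v (mt K E))) E) := by
  have hv := hneg.diag_neg v
  have hmax : ∀ (K : V → ℤ) (E : Finset V), ∃ m : ℤ,
      (∀ i, hUcube G (chTrans G K (dirVec v i)) E ≤ hUcube G (chTrans G K (dirVec v m)) E) ∧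
      ∀ i, hUcube G (chTrans G K (dirVec v i)) E = hUcube G (chTrans G K (dirVec v m)) E →
        hVcube G ε (chTrans G K (dirVec v i)) E ≤ hVcube G ε (chTrans G K (dirVec v m)) E := by
    intro K E
    refine exists_lex_max_of_le_quadratic (fun i => hUcube G (chTrans G K (dirVec v i)) E)
      (fun i => hVcube G ε (chTrans G K (dirVec v i)) E) (G v v) (K v) (hU G K) ?_ fun i => ?_
    · exact_mod_cast Int.le_sub_one_of_lt hv
    · exact (hUcube_le_hU _ _ _).trans_eq (hU_chTrans_dirVec hsym hneg K v i)
  choose m hm₁ hm₂ using hmax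
  -- `off K` is the position of `K` relative to the base point `rep K` of its orbit.
  let off : (V → ℤ) → ℤ := fun K => K v / (2 * G v v)
  let rep : (V → ℤ) → (V → ℤ) := fun K => chTrans G K (dirVec v (-off K))
  have hoff : ∀ K i, off (chTrans G K (dirVec v i)) = off K + i := fun K i => by
    simp only [off, chTrans_dirVec_apply]
    rw [← mul_assoc, Int.add_mul_ediv_left _ _ (by omega)]
  have hrep : ∀ K i, rep (chTrans G K (dirVec v i)) = rep K := fun K i => by
    simp only [rep, hoff, chTrans_dirVec_add]
    congr 2
    ring
  have hback : ∀ K i, chTrans G K (dirVec v i) = chTrans G (rep K) (dirVec v (i + off K)) :=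
    fun K i => by
      simp only [rep, chTrans_dirVec_add]
      congr 2
      ring
  refine ⟨fun K E => m (rep K) E - off K, fun K _ E _ i => ?_, fun K _ E _ i => ?_,
    fun K _ E _ i => ?_⟩
  · simp only [hrep, hoff]
    ring
  · rw [hback K i, hback K (_ - _), sub_add_cancel]
    exact hm₁ _ _ _
  · rw [hback K i, hback K (_ - _), sub_add_cancel]
    exact hm₂ _ _ _
end
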